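/- Let n ≥ 3 and x > 0, and let Z_n(x) be the n-by-n reciprocal matrix with all entries equal to 1 except entry (1,n) equal to x and entry (n,1) equal to 1/x. A positive n-vector w = (w_1, …, w_n) is efficient for Z_n(x) if and only if either (w_n ≤ w_i ≤ w_1 ≤ x·w_n for all i = 2, …, n−1) or (w_n ≥ w_i ≥ w_1 ≥ x·w_n for all i = 2, …, n−1). -/

import Mathlib

/-- An n-by-n positive matrix is reciprocal if `A j i = 1 / A i j` for all `i, j`. -/
def Reciprocal {n : ℕ} (A : Matrix (Fin n) (Fin n) ℝ) : Prop :=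
  (∀ i j, 0 < A i j) ∧ ∀ i j, A j i = 1 / A i j

/-- A positive vector `w` is efficient for a reciprocal matrix `A` if every positive
vector `v` with `|v i / v j - A i j| ≤ |w i / w j - A i j|` entrywise is a positive
scalar multiple of `w`. -/
def Efficient {n : ℕ} (A : Matrix (Fin n) (Fin n) ℝ) (w : Fin n → ℝ) : Prop :=
  ∀ v : Fin n → ℝ, (∀ i, 0 < v i) →
    (∀ i j, |v i / v j - A i j| ≤ |w i / w j - A i j|) →
    ∃ c : ℝ, 0 < c ∧ v = fun i => c * w i

/-!
Draw an edge `i → j` whenever `A i j ≤ w i / w j`. If `v` is entrywise at least as good as `w`,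
then `v i / w i` cannot decrease along an edge, so strong connectivity forces `v` to be a multiple
of `w`. Conversely, if no edge leaves a nonempty proper set `S`, then scaling the entries of `w` in
`S` up slightly does not worsen any ratio, so `w` is not efficient.

When all entries of `A` are `1` except possibly those between two indices `p` and `q`, every edge
touching a third index goes weakly downhill in `w`. The edges are then strongly connected exactly
when one of `w p`, `w q` is the maximum of `w`, the other is the minimum, and there is an edge from
the minimum back up to the maximum.
-/

open Relation

section Efficiency

variable {n : ℕ} {A : Matrix (Fin n) (Fin n) ℝ} {w : Fin n → ℝ}

/-- The edge relation `A i j ≤ w i / w j` of the digraph attached to `A` and `w`, whose strong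
connectivity characterizes efficiency. The inequality is written without division, and loops are
allowed. -/
def EfficiencyAdj (A : Matrix (Fin n) (Fin n) ℝ) (w : Fin n → ℝ) (i j : Fin n) : Prop :=
  A i j * w j ≤ w i

lemma Reciprocal.efficiencyAdj_iff_le_mul (hA : Reciprocal A) (i j : Fin n) :
    EfficiencyAdj A w j i ↔ w i ≤ A i j * w j := by
  rw [EfficiencyAdj, hA.2 i j, one_div, inv_mul_le_iff₀ (hA.1 i j)]

lemma Reciprocal.efficiencyAdj_total (hA : Reciprocal A) (i j : Fin n) :
    EfficiencyAdj A w i j ∨ EfficiencyAdj A w j i := by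
  rw [hA.efficiencyAdj_iff_le_mul]
  exact le_total _ _

lemma EfficiencyAdj.div_le_div {v : Fin n → ℝ} {i j : Fin n} (hij : EfficiencyAdj A w i j)
    (hw : ∀ i, 0 < w i) (hv : ∀ i, 0 < v i)
    (hle : |v i / v j - A i j| ≤ |w i / w j - A i j|) : v i / w i ≤ v j / w j := by
  have hA : A i j ≤ w i / w j := (le_div_iff₀ (hw j)).2 hij
  rw [abs_of_nonneg (sub_nonneg.2 hA)] at hle
  have hratio : v i / v j ≤ w i / w j := by linarith [le_abs_self (v i / v j - A i j)]
  rw [div_le_div_iff₀ (hv j) (hw j)] at hratio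
  rw [div_le_div_iff₀ (hw i) (hw j)]
  linarith

theorem efficient_of_forall_reflTransGen (hw : ∀ i, 0 < w i)
    (hconn : ∀ i j, ReflTransGen (EfficiencyAdj A w) i j) : Efficient A w := by
  intro v hv hle
  have hmono : ∀ i j, v i / w i ≤ v j / w j := fun i j => by
    induction hconn i j with
    | refl => rfl
    | tail _ hadj ih => exact ih.trans (hadj.div_le_div hw hv (hle _ _))
  rcases isEmpty_or_nonempty (Fin n) with _ | ⟨⟨k⟩⟩
  · exact ⟨1, one_pos, Subsingleton.elim _ _⟩
  · refine ⟨v k / w k, div_pos (hv k) (hw k), funext fun i => ?_⟩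
    rw [(hmono k i).antisymm (hmono i k), div_mul_cancel₀ _ (hw i).ne']

open Filter Topology in
lemma exists_one_lt_forall_mul_lt {ι : Type*} [Finite ι] {f g : ι → ℝ} (h : ∀ i, f i < g i) :
    ∃ t, 1 < t ∧ ∀ i, t * f i < g i := by
  have hlt : ∀ᶠ t in 𝓝[>] (1 : ℝ), ∀ i, t * f i < g i := eventually_all.2 fun i =>
    ((continuous_mul_const (f i)).continuousWithinAt.tendsto).eventually_lt_const
      (by simpa using h i)
  exact (eventually_mem_nhdsWithin.and hlt).exists

lemma abs_scale_div_sub_le (hA : Reciprocal A) (hw : ∀ i, 0 < w i) {S : Set (Fin n)}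
    [DecidablePred (· ∈ S)] {t : ℝ} (ht : 1 ≤ t)
    (hcut : ∀ i ∈ S, ∀ j ∉ S, t * w i ≤ A i j * w j) (i j : Fin n) :
    |(if i ∈ S then t * w i else w i) / (if j ∈ S then t * w j else w j) - A i j| ≤
      |w i / w j - A i j| := by
  have ht0 : 0 < t := one_pos.trans_le ht
  have hscale : ∀ k, w k ≤ t * w k := fun k => le_mul_of_one_le_left (hw k).le ht
  by_cases hi : i ∈ S <;> by_cases hj : j ∈ S <;> simp only [hi, hj, if_true, if_false]
  · rw [mul_div_mul_left _ _ ht0.ne']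
  · have hle : w i / w j ≤ t * w i / w j := div_le_div_of_nonneg_right (hscale i) (hw j).le
    have hleA : t * w i / w j ≤ A i j := (div_le_iff₀ (hw j)).2 (hcut i hi j hj)
    exact Set.abs_sub_left_of_mem_uIcc (Set.mem_uIcc_of_ge hle hleA)
  · have hle : w i / (t * w j) ≤ w i / w j := div_le_div_of_nonneg_left (hw i).le (hw j) (hscale j)
    have hAle : A i j ≤ w i / (t * w j) := by
      rw [hA.2 j i, div_le_div_iff₀ (hA.1 j i) (mul_pos ht0 (hw j)), one_mul, mul_comm (w i)]
      exact hcut j hj i hi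
    exact Set.abs_sub_left_of_mem_uIcc (Set.mem_uIcc_of_le hAle hle)
  · rfl

theorem Efficient.exists_efficiencyAdj_of_mem_of_notMem (he : Efficient A w) (hA : Reciprocal A)
    (hw : ∀ i, 0 < w i) {S : Set (Fin n)} {p q : Fin n} (hp : p ∈ S) (hq : q ∉ S) :
    ∃ i ∈ S, ∃ j ∉ S, EfficiencyAdj A w i j := by
  classical
  by_contra! hcut
  obtain ⟨t, ht, htcut⟩ := exists_one_lt_forall_mul_lt
    (f := fun e : S × (Sᶜ : Set (Fin n)) => w e.1) (g := fun e => A e.1 e.2 * w e.2)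
    fun e => not_le.1 (hcut e.1 e.1.2 e.2 e.2.2)
  obtain ⟨c, -, hc⟩ := he (fun i => if i ∈ S then t * w i else w i)
    (fun i => by split_ifs; exacts [mul_pos (one_pos.trans ht) (hw i), hw i])
    (abs_scale_div_sub_le hA hw ht.le fun i hi j hj => (htcut (⟨i, hi⟩, ⟨j, hj⟩)).le)
  have htc : t = c := by simpa [hp, (hw p).ne'] using congrFun hc p
  have hc1 : c = 1 := by simpa [hq, (hw q).ne'] using congrFun hc q
  exact ht.ne' (htc.trans hc1)

theorem efficient_iff_forall_reflTransGen (hA : Reciprocal A) (hw : ∀ i, 0 < w i) :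
    Efficient A w ↔ ∀ i j, ReflTransGen (EfficiencyAdj A w) i j := by
  refine ⟨fun he i j => ?_, efficient_of_forall_reflTransGen hw⟩
  by_contra hij
  obtain ⟨k, hk, l, hl, hkl⟩ := he.exists_efficiencyAdj_of_mem_of_notMem hA hw
    (S := {j | ReflTransGen (EfficiencyAdj A w) i j}) ReflTransGen.refl hij
  exact hl (hk.tail hkl)

/-- `A` has all entries equal to `1`, except possibly those whose row and column both lie in
`{p, q}`. -/
def EqOneOffPair (A : Matrix (Fin n) (Fin n) ℝ) (p q : Fin n) : Prop :=
  ∀ i, i ≠ p → i ≠ q → ∀ j, A i j = 1 ∧ A j i = 1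

namespace EqOneOffPair

variable {p q : Fin n}

lemma symm (hA : EqOneOffPair A p q) : EqOneOffPair A q p :=
  fun i hiq hip => hA i hip hiq

lemma efficiencyAdj_left_iff (hA : EqOneOffPair A p q) {i j : Fin n} (hip : i ≠ p) (hiq : i ≠ q) :
    EfficiencyAdj A w i j ↔ w j ≤ w i := by
  rw [EfficiencyAdj, (hA i hip hiq j).1, one_mul]

lemma efficiencyAdj_right_iff (hA : EqOneOffPair A p q) {i j : Fin n} (hjp : j ≠ p) (hjq : j ≠ q) :
    EfficiencyAdj A w i j ↔ w j ≤ w i := by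
  rw [EfficiencyAdj, (hA j hjp hjq i).2, one_mul]

theorem reflTransGen_of_mem_Icc (hA : EqOneOffPair A p q) {m : Fin n} (hmp : m ≠ p) (hmq : m ≠ q)
    (hw : ∀ i, w i ∈ Set.Icc (w q) (w p)) (hqp : EfficiencyAdj A w q p) (i j : Fin n) :
    ReflTransGen (EfficiencyAdj A w) i j := by
  have from_p {k : Fin n} (hkp : k ≠ p) (hkq : k ≠ q) : EfficiencyAdj A w p k :=
    (hA.efficiencyAdj_right_iff hkp hkq).2 (hw k).2
  have to_q {k : Fin n} (hkp : k ≠ p) (hkq : k ≠ q) : EfficiencyAdj A w k q :=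
    (hA.efficiencyAdj_left_iff hkp hkq).2 (hw k).1
  have reach_p : ReflTransGen (EfficiencyAdj A w) i p := by
    by_cases hip : i = p
    · rw [hip]
    by_cases hiq : i = q
    · exact hiq ▸ .single hqp
    · exact .tail (.single (to_q hip hiq)) hqp
  have reach_from_p : ReflTransGen (EfficiencyAdj A w) p j := by
    by_cases hjp : j = p
    · rw [hjp]
    by_cases hjq : j = q
    · exact hjq ▸ .tail (.single (from_p hmp hmq)) (to_q hmp hmq)
    · exact .single (from_p hjp hjq)
  exact reach_p.trans reach_from_p

lemma le_left_of_reflTransGen (hA : EqOneOffPair A p q) (hqp : w q ≤ w p) {i : Fin n}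
    (hpi : ReflTransGen (EfficiencyAdj A w) p i) : w i ≤ w p := by
  induction hpi with
  | refl => rfl
  | @tail j k _ hjk ih =>
    by_cases hkp : k = p
    · rw [hkp]
    by_cases hkq : k = q
    · rwa [hkq]
    · exact ((hA.efficiencyAdj_right_iff hkp hkq).1 hjk).trans ih

lemma right_le_of_reflTransGen (hA : EqOneOffPair A p q) (hqp : w q ≤ w p) {i : Fin n}
    (hiq : ReflTransGen (EfficiencyAdj A w) i q) : w q ≤ w i := by
  induction hiq using ReflTransGen.head_induction_on with
  | refl => rfl
  | @head j k hjk _ ih =>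
    by_cases hjp : j = p
    · rwa [hjp]
    by_cases hjq : j = q
    · rw [hjq]
    · exact ih.trans ((hA.efficiencyAdj_left_iff hjp hjq).1 hjk)

lemma efficiencyAdj_of_reflTransGen (hA : EqOneOffPair A p q) (hqp : w q < w p)
    (hreach : ReflTransGen (EfficiencyAdj A w) q p) : EfficiencyAdj A w q p := by
  by_contra hnadj
  have below : ∀ i, ReflTransGen (EfficiencyAdj A w) q i → w i < w p := fun i hqi => by
    induction hqi with
    | refl => exact hqp
    | @tail j k _ hjk ih =>
      by_cases hjp : j = p
      · exact absurd (hjp ▸ ih) (lt_irrefl _)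
      by_cases hjq : j = q
      · by_cases hkp : k = p
        · exact absurd (hjq ▸ hkp ▸ hjk) hnadj
        by_cases hkq : k = q
        · rwa [hkq]
        · exact ((hA.efficiencyAdj_right_iff hkp hkq).1 hjk).trans_lt ih
      · exact ((hA.efficiencyAdj_left_iff hjp hjq).1 hjk).trans_lt ih
  exact lt_irrefl _ (below p hreach)

lemma mem_Icc_and_efficiencyAdj_or_of_le (hone : EqOneOffPair A p q) (hA : Reciprocal A)
    (hqp : w q ≤ w p) (hconn : ∀ i j, ReflTransGen (EfficiencyAdj A w) i j) :
    (∀ i, w i ∈ Set.Icc (w q) (w p)) ∧ EfficiencyAdj A w q p ∨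
      (∀ i, w i ∈ Set.Icc (w p) (w q)) ∧ EfficiencyAdj A w p q := by
  have hmem : ∀ i, w i ∈ Set.Icc (w q) (w p) := fun i =>
    ⟨hone.right_le_of_reflTransGen hqp (hconn i q), hone.le_left_of_reflTransGen hqp (hconn p i)⟩
  rcases hqp.lt_or_eq with hlt | heq
  · exact .inl ⟨hmem, hone.efficiencyAdj_of_reflTransGen hlt (hconn q p)⟩
  · rw [heq] at hmem ⊢
    exact (hA.efficiencyAdj_total q p).imp (.intro hmem) (.intro hmem)

theorem efficient_iff (hone : EqOneOffPair A p q) (hA : Reciprocal A) (hw : ∀ i, 0 < w i)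
    {m : Fin n} (hmp : m ≠ p) (hmq : m ≠ q) :
    Efficient A w ↔
      (∀ i, w i ∈ Set.Icc (w q) (w p)) ∧ EfficiencyAdj A w q p ∨
        (∀ i, w i ∈ Set.Icc (w p) (w q)) ∧ EfficiencyAdj A w p q := by
  rw [efficient_iff_forall_reflTransGen hA hw]
  constructor
  · intro hconn
    rcases le_total (w q) (w p) with hqp | hpq
    · exact hone.mem_Icc_and_efficiencyAdj_or_of_le hA hqp hconn
    · exact (hone.symm.mem_Icc_and_efficiencyAdj_or_of_le hA hpq hconn).symm
  · rintro (⟨hmem, hadj⟩ | ⟨hmem, hadj⟩)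
    · exact hone.reflTransGen_of_mem_Icc hmp hmq hmem hadj
    · exact hone.symm.reflTransGen_of_mem_Icc hmq hmp hmem hadj

end EqOneOffPair

/-- The matrix of ones with entry `(p, q)` replaced by `x` and entry `(q, p)` by `1 / x`. The matrix
`Z_n(x)` is the case where `p` and `q` are the first and the last index. -/
noncomputable def simplePerturbed (p q : Fin n) (x : ℝ) : Matrix (Fin n) (Fin n) ℝ := fun i j =>
  if i = p ∧ j = q then x else if i = q ∧ j = p then 1 / x else 1

section SimplePerturbed

variable {p q : Fin n} {x : ℝ}

lemma reciprocal_simplePerturbed (hpq : p ≠ q) (hx : 0 < x) :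
    Reciprocal (simplePerturbed p q x) := by
  constructor <;> intro i j <;> unfold simplePerturbed
  · split_ifs <;> positivity
  · split_ifs <;> simp_all

lemma eqOneOffPair_simplePerturbed : EqOneOffPair (simplePerturbed p q x) p q := by
  intro i hip hiq j
  simp [simplePerturbed, hip, hiq]

theorem efficient_simplePerturbed_iff (hpq : p ≠ q) (hx : 0 < x) (hw : ∀ i, 0 < w i)
    {m : Fin n} (hmp : m ≠ p) (hmq : m ≠ q) :
    Efficient (simplePerturbed p q x) w ↔
      (∀ i, w i ∈ Set.Icc (w q) (w p)) ∧ w p ≤ x * w q ∨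
        (∀ i, w i ∈ Set.Icc (w p) (w q)) ∧ x * w q ≤ w p := by
  have hA := reciprocal_simplePerturbed hpq hx
  have hpq_entry : simplePerturbed p q x p q = x := by simp [simplePerturbed]
  rw [eqOneOffPair_simplePerturbed.efficient_iff hA hw hmp hmq,
    hA.efficiencyAdj_iff_le_mul p q, EfficiencyAdj, hpq_entry]

end SimplePerturbed

lemma forall_fin_iff_first_last_interior (hn : 0 < n) {P : Fin n → Prop} :
    (∀ i, P i) ↔
      P ⟨0, hn⟩ ∧ P ⟨n - 1, by omega⟩ ∧ ∀ i : Fin n, 0 < i.val → i.val < n - 1 → P i := by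
  refine ⟨fun h => ⟨h _, h _, fun i _ _ => h i⟩, fun ⟨hfirst, hlast, hinterior⟩ i => ?_⟩
  rcases Nat.eq_zero_or_pos i.val with h0 | hpos
  · exact (Fin.ext h0 : i = ⟨0, hn⟩) ▸ hfirst
  rcases (Nat.le_sub_one_of_lt i.isLt).eq_or_lt with hl | hlt
  · exact (Fin.ext hl : i = ⟨n - 1, by omega⟩) ▸ hlast
  · exact hinterior i hpos hlt

end Efficiency

/-- Characterization of the efficient vectors for the simple perturbed consistent
matrix `Z_n(x)`: all entries `1` except the `(1,n)` entry, which is `x`, and the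
`(n,1)` entry, which is `1/x`. -/
theorem stmt_11 {n : ℕ} (hn : 3 ≤ n) (x : ℝ) (hx : 0 < x)
    (Z : Matrix (Fin n) (Fin n) ℝ)
    (hZ : Z = fun i j =>
      if i.val = 0 ∧ j.val = n - 1 then x
      else if i.val = n - 1 ∧ j.val = 0 then 1 / x
      else 1)
    (w : Fin n → ℝ) (hw : ∀ i, 0 < w i) :
    Efficient Z w ↔
      ((∀ i : Fin n, 0 < i.val → i.val < n - 1 →
          w ⟨n - 1, by omega⟩ ≤ w i ∧ w i ≤ w ⟨0, by omega⟩) ∧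
        w ⟨n - 1, by omega⟩ ≤ w ⟨0, by omega⟩ ∧
        w ⟨0, by omega⟩ ≤ x * w ⟨n - 1, by omega⟩) ∨
      ((∀ i : Fin n, 0 < i.val → i.val < n - 1 →
          w i ≤ w ⟨n - 1, by omega⟩ ∧ w ⟨0, by omega⟩ ≤ w i) ∧
        w ⟨0, by omega⟩ ≤ w ⟨n - 1, by omega⟩ ∧
        x * w ⟨n - 1, by omega⟩ ≤ w ⟨0, by omega⟩) := by
  have hZ' : Z = simplePerturbed ⟨0, by omega⟩ ⟨n - 1, by omega⟩ x := by
    ext i j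
    simp only [hZ, simplePerturbed, Fin.ext_iff]
  have hne : (⟨0, by omega⟩ : Fin n) ≠ ⟨n - 1, by omega⟩ := Fin.ne_of_val_ne (by lia)
  have hIcc (a b : ℝ) := forall_fin_iff_first_last_interior (by omega)
    (P := fun i : Fin n => w i ∈ Set.Icc a b)
  rw [hZ', efficient_simplePerturbed_iff (m := ⟨1, by omega⟩) hne hx hw
    (Fin.ne_of_val_ne one_ne_zero) (Fin.ne_of_val_ne (by lia)), hIcc, hIcc]
  grind
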